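/- arXiv:1106.4714 — 2 statements merged into one kernel-verified Lean document; each statement's English description precedes it below -/
import Mathlib

section
/- Fix β ≥ 0 and κ > 0 and write N = 𝒩q. Then for any sequences 𝒩_n → ∞ and K_n ∈ ℕ₀ with K_n/(𝒩_n q) → κ/2: (i) lim_n (1/N_n) ln 𝔼_{N_n,c}[ Z̃_{(𝒩_n,q)}(βJ) | {|J| = K_n} ] = 𝒫(β,κ,q), and (ii) lim_n (1/N_n) ln 𝔼_{N_n,c}[ Z̃_{(𝒩_n,q)}(βJ)² | {|J| = K_n} ] = max_{μ ∈ M_*([q]²)} φ^(2)(β,κ,q,μ), where φ^(2)(β,κ,q,μ) = s(μ) + (κ/2) ln( 1 − 2(1−e^{−β})/q + (1−e^{−β})² Σ_{(r₁,r₂)∈[q]²} μ({(r₁,r₂)})² ). -/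
open MeasureTheory Filter

/-- Poisson probability mass function with parameter `lam`. -/
noncomputable def poissonPMF (lam : ℝ) (k : ℕ) : ℝ :=
  Real.exp (-lam) * lam ^ k / (Nat.factorial k)

/-- Potts Hamiltonian `H_N(σ, J) = Σ_{i,j} J_{ij} δ(σ_i, σ_j)`. -/
noncomputable def potts.H (q N : ℕ) (σ : Fin N → Fin q) (J : Fin N → Fin N → ℝ) : ℝ :=
  ∑ i, ∑ j, J i j * (if σ i = σ j then (1 : ℝ) else 0)

/-- Partition function `Z_N(J)`. -/
noncomputable def potts.Z (q N : ℕ) (J : Fin N → Fin N → ℝ) : ℝ :=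
  ∑ σ : Fin N → Fin q, Real.exp (- potts.H q N σ J)

/-- Expectation over the Poissonian disorder: the entries `J_{ij}` are independent
Poisson random variables with means `c_{ij} / (2N)`. -/
noncomputable def potts.E (N : ℕ) (c : Fin N → Fin N → ℝ)
    (g : (Fin N → Fin N → ℕ) → ℝ) : ℝ :=
  ∑' J : Fin N → Fin N → ℕ,
    (∏ i, ∏ j, poissonPMF (c i j / (2 * N)) (J i j)) * g J

/-- Quenched pressure for a general nonnegative connectivity matrix `c`. -/
noncomputable def potts.pmat (q N : ℕ) (β : ℝ) (c : Fin N → Fin N → ℝ) : ℝ :=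
  potts.E N c (fun J => (1 / N) * Real.log (potts.Z q N (fun i j => β * (J i j : ℝ))))

/-- Quenched pressure for the constant connectivity matrix `c_{ij} ≡ c`. -/
noncomputable def potts.p (q N : ℕ) (β c : ℝ) : ℝ :=
  potts.pmat q N β (fun _ _ => c)

/-- Annealed pressure `𝒫(β, c) = ln q + (c/2) ln(1 - (1 - e^{-β})/q)`. -/
noncomputable def potts.annealed (q : ℕ) (β c : ℝ) : ℝ :=
  Real.log q + (c / 2) * Real.log (1 - (1 - Real.exp (-β)) / q)

/-- Conditional disorder expectation given the event `{|J| = K}`, where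
`|J| = Σ_{i,j} J_{ij}`. -/
noncomputable def condE (N : ℕ) (c : ℝ) (K : ℕ) (X : (Fin N → Fin N → ℕ) → ℝ) : ℝ :=
  potts.E N (fun _ _ => c) (fun J => if (∑ i, ∑ j, J i j) = K then X J else 0) /
    potts.E N (fun _ _ => c) (fun J => if (∑ i, ∑ j, J i j) = K then 1 else 0)

/-- `μ ∈ M_*([q]²)`: a probability measure on `[q]²` both of whose marginals are
uniform on `[q]`. -/
def IsBalancedMeasure (q : ℕ) (μ : Fin q → Fin q → ℝ) : Prop :=
  (∀ r₁ r₂, 0 ≤ μ r₁ r₂) ∧ (∀ r₁, ∑ r₂, μ r₁ r₂ = 1 / q) ∧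
    (∀ r₂, ∑ r₁, μ r₁ r₂ = 1 / q)

/-- Second-moment exponent `φ⁽²⁾(β, κ, q, μ) = s(μ) + (κ/2) ln(1 - 2(1-e^{-β})/q
+ (1-e^{-β})² Σ μ²)`. -/
noncomputable def phi2 (q : ℕ) (β κ : ℝ) (μ : Fin q → Fin q → ℝ) : ℝ :=
  (- ∑ r₁, ∑ r₂, μ r₁ r₂ * Real.log (μ r₁ r₂)) +
    (κ / 2) * Real.log (1 - 2 * (1 - Real.exp (-β)) / q +
      (1 - Real.exp (-β)) ^ 2 * ∑ r₁, ∑ r₂, (μ r₁ r₂) ^ 2)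

/-- Constrained (balanced-configuration) partition function `Z̃_{(𝒩,q)}(βJ)`. -/
noncomputable def Ztilde (q M : ℕ) (β : ℝ) (J : Fin (M * q) → Fin (M * q) → ℝ) : ℝ :=
  ∑ σ : Fin (M * q) → Fin q,
    (if ∀ s : Fin q, (Finset.univ.filter fun i => σ i = s).card = M then
      Real.exp (-β * potts.H q (M * q) σ J) else 0)

/-!
Given `|J| = K`, the Poisson matrix `J` is multinomial: `K` edges are placed independently and
uniformly on the `N²` ordered pairs of sites. The conditional moments of `Z̃` are therefore sums
over balanced configurations, or pairs of them, of the `K`-th power of the mean Boltzmann factor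
of one random edge, which depends on the configuration only through its empirical measure.
Grouping by occupation numbers leaves a sum of multinomial coefficients times `F ^ K`. By
Stirling's formula a multinomial coefficient is `exp (N s(μ))` up to a polynomial factor, and
there are only polynomially many occupation vectors, so the largest term determines the growth
rate. Finally, every measure in `M_*([q]²)` is a limit of empirical measures of pairs of balanced
configurations: by Birkhoff's theorem it is a mixture of permutation matrices, whose weights can
be rounded to multiples of `1 / M`.
-/

section MethodOfTypes

open Finset

lemma prod_X_pow_eq_monomial {A : Type*} [Fintype A] (n : A → ℕ) :
    ∏ a, (MvPolynomial.X a : MvPolynomial A ℕ) ^ n a =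
      MvPolynomial.monomial (Finsupp.equivFunOnFinite.symm n) 1 := by
  simp [MvPolynomial.monomial_eq, Finsupp.prod_fintype]

variable {ι A B : Type*} [Fintype ι] [DecidableEq A] [DecidableEq B]

/-- The occupation numbers of a configuration `f : ι → A` (its *type*, in the language of
information theory): `occupation f a` sites carry the spin `a`. -/
def occupation (f : ι → A) (a : A) : ℕ := #{i | f i = a}

lemma sum_occupation_prod_right [Fintype B] (f : ι → A × B) (a : A) :
    ∑ b, occupation f (a, b) = occupation (fun i ↦ (f i).1) a := by
  rw [occupation, card_eq_sum_card_fiberwise (f := fun i ↦ (f i).2) (t := univ) (by simp)]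
  simp [occupation, filter_filter, Prod.ext_iff]

lemma sum_occupation_prod_left [Fintype A] (f : ι → A × B) (b : B) :
    ∑ a, occupation f (a, b) = occupation (fun i ↦ (f i).2) b := by
  rw [occupation, card_eq_sum_card_fiberwise (f := fun i ↦ (f i).1) (t := univ) (by simp)]
  simp [occupation, filter_filter, Prod.ext_iff, and_comm]

lemma sum_sum_ite_eq [Fintype A] (f : ι → A) :
    ∑ i, ∑ j, (if f i = f j then (1 : ℝ) else 0) = ∑ a, (occupation f a : ℝ) ^ 2 := by
  have inner_sum (i : ι) : ∑ j, (if f i = f j then (1 : ℝ) else 0) = occupation f (f i) := by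
    simp [occupation, eq_comm]
  simp_rw [inner_sum]
  rw [← sum_fiberwise univ f]
  refine sum_congr rfl fun a _ ↦ ?_
  rw [sum_congr rfl fun i hi ↦ by rw [(mem_filter.1 hi).2], sum_const, nsmul_eq_mul, sq]
  rfl

lemma prod_X_eq_monomial_occupation [Finite A] (f : ι → A) :
    ∏ i, (MvPolynomial.X (f i) : MvPolynomial A ℕ) =
      MvPolynomial.monomial (Finsupp.equivFunOnFinite.symm (occupation f)) 1 := by
  have hsum : ∑ i, Finsupp.single (f i) 1 = Finsupp.equivFunOnFinite.symm (occupation f) := by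
    ext a
    simp [Finsupp.finsetSum_apply, Finsupp.single_apply, occupation]
  rw [← hsum, MvPolynomial.monomial_sum_one]
  rfl

section Counting

variable [DecidableEq ι] [Fintype A]

lemma card_occupation_eq (n : A → ℕ) (hn : ∑ a, n a = Fintype.card ι) :
    #{f : ι → A | occupation f = n} = Nat.multinomial univ n := by
  -- Both sides are the coefficient of `∏ a, X a ^ n a` in `(∑ a, X a) ^ card ι`.
  have expand : ∑ f : ι → A, ∏ i, (MvPolynomial.X (f i) : MvPolynomial A ℕ) =
      ∑ k ∈ piAntidiag univ (Fintype.card ι),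
        Nat.multinomial univ k • ∏ a, (MvPolynomial.X a : MvPolynomial A ℕ) ^ k a := by
    simp_rw [nsmul_eq_mul]
    rw [← sum_pow_eq_sum_piAntidiag, ← Fintype.piFinset_univ, ← prod_univ_sum, prod_const,
      card_univ]
  have hmem : n ∈ piAntidiag univ (Fintype.card ι) := by simp [hn]
  have coeff_eq := congrArg (MvPolynomial.coeff (Finsupp.equivFunOnFinite.symm n)) expand
  simp only [prod_X_eq_monomial_occupation, prod_X_pow_eq_monomial, MvPolynomial.coeff_sum,
    MvPolynomial.coeff_smul, MvPolynomial.coeff_monomial, EmbeddingLike.apply_eq_iff_eq,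
    smul_eq_mul, mul_ite, mul_one, mul_zero, sum_ite_eq', if_pos hmem] at coeff_eq
  rwa [card_filter]

lemma sum_occupation_mem (T : Finset (A → ℕ)) (hT : ∀ n ∈ T, ∑ a, n a = Fintype.card ι)
    (G : (A → ℕ) → ℝ) :
    ∑ f : ι → A with occupation f ∈ T, G (occupation f) =
      ∑ n ∈ T, (Nat.multinomial univ n : ℝ) * G n := by
  rw [← sum_fiberwise_of_maps_to (g := occupation) (t := T) fun f hf ↦ (mem_filter.1 hf).2]
  refine sum_congr rfl fun n hn ↦ ?_
  have fiber : ({f : ι → A | occupation f ∈ T} : Finset (ι → A)).filter (occupation · = n) =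
      ({f | occupation f = n} : Finset (ι → A)) := by
    rw [filter_filter]
    exact filter_congr fun f _ ↦ and_iff_right_of_imp fun hf ↦ hf ▸ hn
  rw [fiber, sum_congr rfl fun f hf ↦ by rw [(mem_filter.1 hf).2], sum_const,
    card_occupation_eq n (hT n hn), nsmul_eq_mul]

end Counting

end MethodOfTypes

section Entropy

open Finset
open scoped Nat

lemma mul_log_sub_self_le_log_factorial (n : ℕ) : n * Real.log n - n ≤ Real.log n ! := by
  rcases eq_or_ne n 0 with rfl | hn
  · simp
  have log_n_nonneg : 0 ≤ Real.log n := Real.log_natCast_nonneg n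
  have log_two_pi_nonneg : 0 ≤ Real.log (2 * Real.pi) :=
    Real.log_nonneg (by linarith [Real.two_le_pi])
  linarith [Stirling.le_log_factorial_stirling hn]

lemma log_factorial_le (n : ℕ) :
    Real.log n ! ≤ n * Real.log n - n + (1 + Real.log (n + 1)) := by
  rcases n with - | m
  · simp
  have stirling_le : Real.log (Stirling.stirlingSeq (m + 1)) ≤ 1 - Real.log 2 / 2 := by
    have := Stirling.log_stirlingSeq'_antitone (Nat.zero_le m)
    rwa [Function.comp_apply, Function.comp_apply, Function.comp_apply, Function.comp_apply,
      Stirling.stirlingSeq_one, Real.log_div (Real.exp_ne_zero _) (by positivity), Real.log_exp,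
      Real.log_sqrt zero_le_two] at this
  have hm : ((m + 1 : ℕ) : ℝ) ≠ 0 := by positivity
  rw [Stirling.log_stirlingSeq_formula, Real.log_mul two_ne_zero hm,
    Real.log_div hm (Real.exp_ne_zero _), Real.log_exp] at stirling_le
  have log_nonneg : 0 ≤ Real.log (m + 1 : ℕ) := Real.log_natCast_nonneg _
  have log_mono : Real.log (m + 1 : ℕ) ≤ Real.log ((m + 1 : ℕ) + 1) :=
    Real.log_le_log (by positivity) (by linarith)
  linarith

variable {A : Type*} [Fintype A]

/-- Shannon entropy `s(μ) = -∑ μ(a) ln μ(a)`, with the usual convention `0 ln 0 = 0`. -/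
noncomputable def shannonEntropy (μ : A → ℝ) : ℝ := ∑ a, Real.negMulLog (μ a)

/-- The empirical measure `n / N` of the occupation numbers `n` of a configuration of `N` sites;
the total `N` is a separate argument. -/
noncomputable def empiricalMeasure (N : ℕ) (n : A → ℕ) (a : A) : ℝ := n a / N

lemma continuous_shannonEntropy : Continuous (shannonEntropy : (A → ℝ) → ℝ) := by
  unfold shannonEntropy
  fun_prop

lemma shannonEntropy_uniform [Nonempty A] :
    shannonEntropy (fun _ : A ↦ (1 : ℝ) / Fintype.card A) = Real.log (Fintype.card A) := by
  simp [shannonEntropy, Real.negMulLog]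

lemma mul_shannonEntropy_empiricalMeasure {N : ℕ} (n : A → ℕ) (hn : ∑ a, n a = N) :
    N * shannonEntropy (empiricalMeasure N n) = N * Real.log N - ∑ a, n a * Real.log (n a) := by
  rcases eq_or_ne N 0 with rfl | hN
  · simp_all
  have hN' : (N : ℝ) ≠ 0 := Nat.cast_ne_zero.2 hN
  have term (a : A) : N * Real.negMulLog (empiricalMeasure N n a) =
      n a * Real.log N - n a * Real.log (n a) := by
    rcases eq_or_ne (n a) 0 with h | h
    · simp [empiricalMeasure, h]
    · rw [Real.negMulLog, empiricalMeasure, Real.log_div (Nat.cast_ne_zero.2 h) hN']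
      field_simp
      ring
  rw [shannonEntropy, mul_sum, sum_congr rfl fun a _ ↦ term a, sum_sub_distrib, ← sum_mul,
    ← Nat.cast_sum, hn]

lemma log_multinomial (n : A → ℕ) :
    Real.log (Nat.multinomial univ n) =
      Real.log (∑ a, n a)! - ∑ a, Real.log (n a)! := by
  have factorial_ne_zero (a : A) (_ : a ∈ univ) : ((n a)! : ℝ) ≠ 0 :=
    Nat.cast_ne_zero.2 (n a).factorial_ne_zero
  have multinomial_ne_zero : (Nat.multinomial univ n : ℝ) ≠ 0 :=
    Nat.cast_ne_zero.2 (Nat.multinomial_pos univ n).ne'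
  rw [← Nat.multinomial_spec, Nat.cast_mul, Nat.cast_prod,
    Real.log_mul (prod_ne_zero_iff.2 factorial_ne_zero) multinomial_ne_zero,
    Real.log_prod factorial_ne_zero]
  ring

lemma log_multinomial_le {N : ℕ} (n : A → ℕ) (hn : ∑ a, n a = N) :
    Real.log (Nat.multinomial univ n) ≤
      N * shannonEntropy (empiricalMeasure N n) + (1 + Real.log (N + 1)) := by
  have lower := sum_le_sum fun a (_ : a ∈ univ) ↦ mul_log_sub_self_le_log_factorial (n a)
  rw [sum_sub_distrib, ← Nat.cast_sum, hn] at lower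
  rw [log_multinomial, hn, mul_shannonEntropy_empiricalMeasure n hn]
  linarith [log_factorial_le N]

lemma le_log_multinomial {N : ℕ} (n : A → ℕ) (hn : ∑ a, n a = N) :
    N * shannonEntropy (empiricalMeasure N n) - Fintype.card A * (1 + Real.log (N + 1)) ≤
      Real.log (Nat.multinomial univ n) := by
  have n_le (a : A) : n a ≤ N := hn ▸ single_le_sum (fun _ _ ↦ Nat.zero_le _) (mem_univ a)
  have factorial_le (a : A) (_ : a ∈ univ) : Real.log (n a)! ≤
      n a * Real.log (n a) - n a + (1 + Real.log (N + 1)) :=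
    (log_factorial_le (n a)).trans (by gcongr; exact n_le a)
  have upper := sum_le_sum factorial_le
  rw [sum_add_distrib, sum_sub_distrib, ← Nat.cast_sum, hn, sum_const, card_univ,
    nsmul_eq_mul] at upper
  rw [log_multinomial, hn, mul_shannonEntropy_empiricalMeasure n hn]
  linarith [mul_log_sub_self_le_log_factorial N]

end Entropy

section LaplacePrinciple

open Finset
open scoped Topology

variable {A : Type*} [Fintype A]

lemma card_le_pow_of_forall_sum_eq {N : ℕ} (T : Finset (A → ℕ)) (hT : ∀ n ∈ T, ∑ a, n a = N) :
    #T ≤ (N + 1) ^ Fintype.card A := by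
  classical
  have hsub : T ⊆ Fintype.piFinset fun _ ↦ range (N + 1) := fun n hn ↦
    Fintype.mem_piFinset.2 fun a ↦ mem_range_succ_iff.2 <|
      hT n hn ▸ single_le_sum (fun _ _ ↦ Nat.zero_le _) (mem_univ a)
  simpa using card_le_card hsub

section FixedSize

variable {N : ℕ} {T : Finset (A → ℕ)} {G : (A → ℕ) → ℝ}

lemma le_log_sum_multinomial_mul (hT : ∀ n ∈ T, ∑ a, n a = N) (hG : ∀ n ∈ T, 0 < G n)
    {n : A → ℕ} (hn : n ∈ T) :
    N * shannonEntropy (empiricalMeasure N n) + Real.log (G n)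
        - Fintype.card A * (1 + Real.log (N + 1)) ≤
      Real.log (∑ k ∈ T, Nat.multinomial univ k * G k) := by
  have multinomial_pos : (0 : ℝ) < Nat.multinomial univ n :=
    Nat.cast_pos.2 (Nat.multinomial_pos univ n)
  have single_le : Nat.multinomial univ n * G n ≤ ∑ k ∈ T, Nat.multinomial univ k * G k :=
    single_le_sum (f := fun k ↦ (Nat.multinomial univ k : ℝ) * G k)
      (fun k hk ↦ mul_nonneg (Nat.cast_nonneg _) (hG k hk).le) hn
  have log_le := Real.log_le_log (mul_pos multinomial_pos (hG n hn)) single_le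
  rw [Real.log_mul multinomial_pos.ne' (hG n hn).ne'] at log_le
  linarith [le_log_multinomial n (hT n hn)]

lemma log_sum_multinomial_mul_le (hT : ∀ n ∈ T, ∑ a, n a = N) (hG : ∀ n ∈ T, 0 < G n)
    (hne : T.Nonempty) {S : ℝ}
    (hS : ∀ n ∈ T, N * shannonEntropy (empiricalMeasure N n) + Real.log (G n) ≤ S) :
    Real.log (∑ n ∈ T, Nat.multinomial univ n * G n) ≤
      S + (Fintype.card A + 1) * (1 + Real.log (N + 1)) := by
  have multinomial_pos (n : A → ℕ) : (0 : ℝ) < Nat.multinomial univ n :=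
    Nat.cast_pos.2 (Nat.multinomial_pos univ n)
  set R := S + (1 + Real.log (N + 1))
  have term_le (n : A → ℕ) (hn : n ∈ T) : Nat.multinomial univ n * G n ≤ Real.exp R := by
    rw [← Real.log_le_iff_le_exp (mul_pos (multinomial_pos n) (hG n hn)),
      Real.log_mul (multinomial_pos n).ne' (hG n hn).ne']
    linarith [log_multinomial_le n (hT n hn), hS n hn]
  have sum_le : ∑ n ∈ T, Nat.multinomial univ n * G n ≤
      ((N : ℝ) + 1) ^ Fintype.card A * Real.exp R := by
    refine (sum_le_card_nsmul T _ _ term_le).trans ?_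
    rw [nsmul_eq_mul]
    gcongr
    exact_mod_cast card_le_pow_of_forall_sum_eq T hT
  have sum_pos : 0 < ∑ n ∈ T, Nat.multinomial univ n * G n :=
    Finset.sum_pos (fun n hn ↦ mul_pos (multinomial_pos n) (hG n hn)) hne
  have log_le := Real.log_le_log sum_pos sum_le
  rw [Real.log_mul (by positivity) (Real.exp_ne_zero R), Real.log_pow, Real.log_exp] at log_le
  have : (0 : ℝ) ≤ Fintype.card A := Nat.cast_nonneg _
  linarith

end FixedSize

/-- The sum `∑ n ∈ T, (multinomial coefficient of n) * F(n / N) ^ K` to which a sum over the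
configurations with occupation numbers in `T` of a function `F ^ K` of the empirical measure
collapses. -/
noncomputable def typeSum (N K : ℕ) (T : Finset (A → ℕ)) (F : (A → ℝ) → ℝ) : ℝ :=
  ∑ n ∈ T, Nat.multinomial univ n * F (empiricalMeasure N n) ^ K

/-- The exponential growth rate `s(μ) + t ln F(μ)` of the contribution of the configurations with
empirical measure near `μ` to `typeSum N K T F`, where `t` is the limit of `K / N`. -/
noncomputable def typeRate (t : ℝ) (F : (A → ℝ) → ℝ) (μ : A → ℝ) : ℝ :=
  shannonEntropy μ + t * Real.log (F μ)

lemma tendsto_one_add_log_div :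
    Tendsto (fun N : ℕ ↦ (1 + Real.log (N + 1)) / N) atTop (𝓝 0) := by
  have log_part : Tendsto (fun N : ℕ ↦ Real.log (N + 1) / N) atTop (𝓝 0) := by
    have := (Real.tendsto_pow_log_div_mul_add_atTop 1 (-1) 1 one_ne_zero).comp
      (tendsto_atTop_add_const_right atTop (1 : ℝ) tendsto_natCast_atTop_atTop)
    refine this.congr fun N ↦ ?_
    simp
  simpa [add_div] using tendsto_one_div_atTop_nhds_zero_nat.add log_part

variable {α : Type*} {l : Filter α} {N K : α → ℕ} {T : α → Finset (A → ℕ)} {C : Set (A → ℝ)}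
  {F : (A → ℝ) → ℝ} {t : ℝ}

lemma continuousOn_typeRate (hF : ContinuousOn F C) (hFpos : ∀ μ ∈ C, 0 < F μ) (t : ℝ) :
    ContinuousOn (typeRate t F) C :=
  continuous_shannonEntropy.continuousOn.add
    (continuousOn_const.mul (hF.log fun μ hμ ↦ (hFpos μ hμ).ne'))

/-- A single type near `μ` already contributes `exp (N * typeRate t F μ)`, up to a subexponential
factor. -/
lemma eventually_lt_log_typeSum (hN : Tendsto N l atTop)
    (hK : Tendsto (fun i ↦ (K i : ℝ) / N i) l (𝓝 t)) (hF : ContinuousOn F C)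
    (hFpos : ∀ μ ∈ C, 0 < F μ) (hT : ∀ i, ∀ n ∈ T i, ∑ a, n a = N i)
    (hTC : ∀ᶠ i in l, ∀ n ∈ T i, empiricalMeasure (N i) n ∈ C) {μ : A → ℝ} (hμ : μ ∈ C)
    {n : α → A → ℕ} (hnT : ∀ᶠ i in l, n i ∈ T i)
    (hnμ : Tendsto (fun i ↦ empiricalMeasure (N i) (n i)) l (𝓝 μ)) {x : ℝ}
    (hx : x < typeRate t F μ) :
    ∀ᶠ i in l, x < 1 / N i * Real.log (typeSum (N i) (K i) (T i) F) := by
  have hnC : ∀ᶠ i in l, empiricalMeasure (N i) (n i) ∈ C :=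
    (hTC.and hnT).mono fun i hi ↦ hi.1 _ hi.2
  have F_lim : Tendsto (fun i ↦ F (empiricalMeasure (N i) (n i))) l (𝓝 (F μ)) :=
    (hF μ hμ).tendsto.comp (tendsto_nhdsWithin_iff.2 ⟨hnμ, hnC⟩)
  have bound_lim := (((continuous_shannonEntropy.tendsto μ).comp hnμ).add
    (hK.mul (F_lim.log (hFpos μ hμ).ne'))).sub
    ((tendsto_one_add_log_div.comp hN).const_mul (Fintype.card A : ℝ))
  rw [mul_zero, sub_zero] at bound_lim
  filter_upwards [bound_lim.eventually (lt_mem_nhds hx), hnT, hTC,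
    hN.eventually (eventually_gt_atTop 0)] with i hxi hni hCi hNi
  refine hxi.trans_le ?_
  have hNi' : (0 : ℝ) < N i := Nat.cast_pos.2 hNi
  have key := le_log_sum_multinomial_mul (G := fun k ↦ F (empiricalMeasure (N i) k) ^ K i)
    (hT i) (fun k hk ↦ pow_pos (hFpos _ (hCi k hk)) _) hni
  rw [Real.log_pow] at key
  rw [one_div_mul_eq_div, le_div_iff₀ hNi']
  refine le_trans (le_of_eq ?_) key
  simp only [Function.comp_apply]
  field_simp

/-- There are only polynomially many types, so their number does not affect the growth rate. -/
lemma eventually_log_typeSum_lt (hN : Tendsto N l atTop)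
    (hK : Tendsto (fun i ↦ (K i : ℝ) / N i) l (𝓝 t)) (hC : IsCompact C)
    (hF : ContinuousOn F C) (hFpos : ∀ μ ∈ C, 0 < F μ) (hT : ∀ i, ∀ n ∈ T i, ∑ a, n a = N i)
    (hTC : ∀ᶠ i in l, ∀ n ∈ T i, empiricalMeasure (N i) n ∈ C)
    (hTne : ∀ᶠ i in l, (T i).Nonempty) {S x : ℝ} (hS : ∀ μ ∈ C, typeRate t F μ ≤ S)
    (hx : S < x) :
    ∀ᶠ i in l, 1 / N i * Real.log (typeSum (N i) (K i) (T i) F) < x := by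
  obtain ⟨B, hB⟩ := hC.exists_bound_of_continuousOn (hF.log fun μ hμ ↦ (hFpos μ hμ).ne')
  have bound_lim := (((hK.sub_const t).abs.mul_const B).const_add S).add
    ((tendsto_one_add_log_div.comp hN).const_mul (Fintype.card A + 1 : ℝ))
  rw [sub_self, abs_zero, zero_mul, mul_zero, add_zero, add_zero] at bound_lim
  filter_upwards [bound_lim.eventually (gt_mem_nhds hx), hTne, hTC,
    hN.eventually (eventually_gt_atTop 0)] with i hxi hne hCi hNi
  refine lt_of_le_of_lt ?_ hxi
  have hNi' : (0 : ℝ) < N i := Nat.cast_pos.2 hNi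
  have rate_le (n : A → ℕ) (hn : n ∈ T i) :
      N i * shannonEntropy (empiricalMeasure (N i) n)
        + Real.log (F (empiricalMeasure (N i) n) ^ K i) ≤ N i * (S + |K i / N i - t| * B) := by
    set ν := empiricalMeasure (N i) n
    have drift : (K i / N i - t) * Real.log (F ν) ≤ |K i / N i - t| * B :=
      (le_abs_self _).trans <| (abs_mul _ _).trans_le <|
        mul_le_mul_of_nonneg_left (hB ν (hCi n hn)) (abs_nonneg _)
    calc N i * shannonEntropy ν + Real.log (F ν ^ K i)
        = N i * (typeRate t F ν + (K i / N i - t) * Real.log (F ν)) := by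
          rw [Real.log_pow, typeRate]
          field_simp
          ring
      _ ≤ N i * (S + |K i / N i - t| * B) := by
          gcongr
          exact hS ν (hCi n hn)
  have key := log_sum_multinomial_mul_le (hT i)
    (fun n hn ↦ pow_pos (hFpos _ (hCi n hn)) _) hne rate_le
  rw [one_div_mul_eq_div, div_le_iff₀ hNi']
  refine key.trans (le_of_eq ?_)
  simp only [Function.comp_apply]
  field_simp

/-- The Laplace principle (Varadhan's lemma) for sums over types. -/
theorem tendsto_log_typeSum (hN : Tendsto N l atTop)
    (hK : Tendsto (fun i ↦ (K i : ℝ) / N i) l (𝓝 t)) (hC : IsCompact C) (hCne : C.Nonempty)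
    (hF : ContinuousOn F C) (hFpos : ∀ μ ∈ C, 0 < F μ) (hT : ∀ i, ∀ n ∈ T i, ∑ a, n a = N i)
    (hTC : ∀ᶠ i in l, ∀ n ∈ T i, empiricalMeasure (N i) n ∈ C)
    (hdense : ∀ μ ∈ C, ∃ n : α → A → ℕ, (∀ᶠ i in l, n i ∈ T i) ∧
      Tendsto (fun i ↦ empiricalMeasure (N i) (n i)) l (𝓝 μ)) :
    Tendsto (fun i ↦ 1 / N i * Real.log (typeSum (N i) (K i) (T i) F)) l
      (𝓝 (sSup (typeRate t F '' C))) := by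
  have bdd : BddAbove (typeRate t F '' C) :=
    hC.bddAbove_image (continuousOn_typeRate hF hFpos t)
  have hTne : ∀ᶠ i in l, (T i).Nonempty := by
    obtain ⟨n, hnT, -⟩ := hdense _ hCne.some_mem
    exact hnT.mono fun i hi ↦ ⟨n i, hi⟩
  refine tendsto_order.2 ⟨fun x hx ↦ ?_, fun x hx ↦ ?_⟩
  · obtain ⟨-, ⟨μ, hμ, rfl⟩, hxμ⟩ := exists_lt_of_lt_csSup (hCne.image _) hx
    obtain ⟨n, hnT, hnμ⟩ := hdense μ hμ
    exact eventually_lt_log_typeSum hN hK hF hFpos hT hTC hμ hnT hnμ hxμ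
  · exact eventually_log_typeSum_lt hN hK hC hF hFpos hT hTC hTne
      (fun μ hμ ↦ le_csSup bdd (Set.mem_image_of_mem _ hμ)) hx

end LaplacePrinciple

section BalancedMeasures

open Finset
open scoped Topology

lemma exists_nat_tendsto_of_mem_stdSimplex {P : Type*} [Fintype P] {w : P → ℝ}
    (hw : w ∈ stdSimplex ℝ P) :
    ∃ k : ℕ → P → ℕ, (∀ m, ∑ p, k m p = m) ∧
      ∀ p, Tendsto (fun m ↦ (k m p : ℝ) / m) atTop (𝓝 (w p)) := by
  classical
  obtain ⟨hw0, hw1⟩ := hw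
  obtain ⟨p₀⟩ : Nonempty P := by
    by_contra h
    simp [not_nonempty_iff.1 h] at hw1
  let others : Finset P := univ.erase p₀
  have sum_floor_le (m : ℕ) : ∑ p ∈ others, ⌊w p * m⌋₊ ≤ m := by
    have : ∑ p ∈ others, (⌊w p * m⌋₊ : ℝ) ≤ m :=
      calc ∑ p ∈ others, (⌊w p * m⌋₊ : ℝ) ≤ ∑ p ∈ others, w p * m :=
            sum_le_sum fun p _ ↦ Nat.floor_le (mul_nonneg (hw0 p) m.cast_nonneg)
        _ ≤ ∑ p, w p * m := sum_le_univ_sum_of_nonneg fun p ↦ mul_nonneg (hw0 p) m.cast_nonneg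
        _ = m := by rw [← sum_mul, hw1, one_mul]
    exact_mod_cast this
  have floor_lim (p : P) : Tendsto (fun m : ℕ ↦ (⌊w p * m⌋₊ : ℝ) / m) atTop (𝓝 (w p)) :=
    (tendsto_nat_floor_mul_div_atTop (hw0 p)).comp tendsto_natCast_atTop_atTop
  -- Round down every weight except that of `p₀`, which absorbs the rounding errors.
  refine ⟨fun m ↦ Function.update (fun p ↦ ⌊w p * m⌋₊) p₀ (m - ∑ p ∈ others, ⌊w p * m⌋₊),
    fun m ↦ ?_, fun p ↦ ?_⟩
  · rw [sum_update_of_mem (mem_univ p₀), sdiff_singleton_eq_erase]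
    exact Nat.sub_add_cancel (sum_floor_le m)
  rcases eq_or_ne p p₀ with rfl | hp
  · have hwp : w p = 1 - ∑ p' ∈ others, w p' :=
      eq_sub_of_add_eq (hw1 ▸ add_sum_erase univ w (mem_univ p))
    rw [hwp]
    refine ((tendsto_finsetSum others fun p' _ ↦ floor_lim p').const_sub 1).congr' ?_
    filter_upwards [eventually_ne_atTop 0] with m hm
    rw [Function.update_self, Nat.cast_sub (sum_floor_le m), Nat.cast_sum, sub_div, sum_div,
      div_self (Nat.cast_ne_zero.2 hm)]
  · simpa only [Function.update_of_ne hp] using floor_lim p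

/-- `M_*([q]²)`, as a set of functions on pairs of spins. -/
def balancedMeasures (q : ℕ) : Set (Fin q × Fin q → ℝ) :=
  {μ | IsBalancedMeasure q (Function.curry μ)}

/-- The `q × q` contingency tables with all row and column sums equal to `M`: the occupation
numbers of pairs of balanced configurations. -/
def balancedTables (q M : ℕ) : Finset (Fin q × Fin q → ℕ) :=
  {n ∈ piAntidiag univ (M * q) | (∀ r, ∑ s, n (r, s) = M) ∧ ∀ s, ∑ r, n (r, s) = M}

lemma mem_balancedTables {q M : ℕ} {n : Fin q × Fin q → ℕ} :
    n ∈ balancedTables q M ↔ (∀ r, ∑ s, n (r, s) = M) ∧ ∀ s, ∑ r, n (r, s) = M := by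
  simp only [balancedTables, mem_filter, mem_piAntidiag, and_iff_right_iff_imp]
  rintro ⟨rows, -⟩
  simp [Fintype.sum_prod_type, rows, mul_comm]

lemma sum_eq_of_mem_balancedTables {q M : ℕ} {n : Fin q × Fin q → ℕ}
    (hn : n ∈ balancedTables q M) : ∑ a, n a = M * q :=
  (mem_piAntidiag.1 (mem_filter.1 hn).1).1

variable {q : ℕ}

lemma empiricalMeasure_mem_balancedMeasures {M : ℕ} (hM : 0 < M) {n : Fin q × Fin q → ℕ}
    (hn : n ∈ balancedTables q M) : empiricalMeasure (M * q) n ∈ balancedMeasures q := by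
  obtain ⟨rows, cols⟩ := mem_balancedTables.1 hn
  have hM' : (M : ℝ) ≠ 0 := Nat.cast_ne_zero.2 hM.ne'
  have total : (M : ℝ) / (M * q : ℕ) = 1 / q := by
    rw [Nat.cast_mul, div_mul_eq_div_div, div_self hM']
  refine ⟨fun r s ↦ div_nonneg (Nat.cast_nonneg _) (Nat.cast_nonneg _), fun r ↦ ?_, fun s ↦ ?_⟩
  · simp only [Function.curry_apply, empiricalMeasure]
    rw [← sum_div, ← Nat.cast_sum, rows, total]
  · simp only [Function.curry_apply, empiricalMeasure]
    rw [← sum_div, ← Nat.cast_sum, cols, total]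

lemma le_one_of_mem_balancedMeasures {μ : Fin q × Fin q → ℝ} (hμ : μ ∈ balancedMeasures q)
    (a : Fin q × Fin q) : μ a ≤ 1 :=
  calc μ a ≤ ∑ s, μ (a.1, s) :=
        single_le_sum (f := fun s ↦ μ (a.1, s)) (fun s _ ↦ hμ.1 a.1 s) (mem_univ a.2)
    _ = 1 / q := hμ.2.1 a.1
    _ ≤ 1 := by simpa using Nat.cast_inv_le_one q

lemma isCompact_balancedMeasures (q : ℕ) : IsCompact (balancedMeasures q) := by
  refine (isCompact_Icc (a := (0 : Fin q × Fin q → ℝ)) (b := 1)).of_isClosed_subset ?_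
    fun μ hμ ↦ ⟨fun a : Fin q × Fin q ↦ hμ.1 a.1 a.2, le_one_of_mem_balancedMeasures hμ⟩
  simp only [balancedMeasures, IsBalancedMeasure, Function.curry_apply, Set.ofPred_and,
    Set.ofPred_forall]
  refine .inter ?_ (.inter ?_ ?_)
  · exact isClosed_iInter fun r ↦ isClosed_iInter fun s ↦ isClosed_le (by fun_prop) (by fun_prop)
  · exact isClosed_iInter fun r ↦ isClosed_eq (by fun_prop) (by fun_prop)
  · exact isClosed_iInter fun s ↦ isClosed_eq (by fun_prop) (by fun_prop)

lemma uniform_mem_balancedMeasures (hq : 0 < q) :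
    (fun _ ↦ 1 / (q : ℝ) ^ 2) ∈ balancedMeasures q := by
  have total : ∑ _ : Fin q, 1 / (q : ℝ) ^ 2 = 1 / (q : ℝ) := by
    simp only [sum_const, card_univ, Fintype.card_fin, nsmul_eq_mul]
    field_simp
  exact ⟨fun _ _ ↦ by simp only [Function.curry_apply]; positivity, fun _ ↦ total, fun _ ↦ total⟩

/-- Birkhoff's theorem, for `q μ`. -/
lemma exists_eq_sum_perm_of_mem_balancedMeasures (hq : 0 < q) {μ : Fin q × Fin q → ℝ}
    (hμ : μ ∈ balancedMeasures q) :
    ∃ w ∈ stdSimplex ℝ (Equiv.Perm (Fin q)),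
      ∀ r s, μ (r, s) = (∑ π : Equiv.Perm (Fin q), if π r = s then w π else 0) / q := by
  obtain ⟨nonneg, rows, cols⟩ := hμ
  have hq' : (q : ℝ) ≠ 0 := Nat.cast_ne_zero.2 hq.ne'
  have doubly_stochastic :
      (Matrix.of fun r s ↦ (q : ℝ) * μ (r, s)) ∈ doublyStochastic ℝ (Fin q) := by
    simp only [Function.curry_apply] at rows cols
    refine mem_doublyStochastic_iff_sum.2
      ⟨fun r s ↦ mul_nonneg q.cast_nonneg (nonneg r s), fun r ↦ ?_, fun s ↦ ?_⟩
    · simp only [Matrix.of_apply, ← mul_sum, rows, mul_one_div_cancel hq']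
    · simp only [Matrix.of_apply, ← mul_sum, cols, mul_one_div_cancel hq']
  obtain ⟨w, hw0, hw1, hw⟩ := exists_eq_sum_perm_of_mem_doublyStochastic doubly_stochastic
  refine ⟨w, ⟨hw0, hw1⟩, fun r s ↦ (eq_div_iff hq').2 ?_⟩
  have entry := congrFun (congrFun hw r) s
  simp only [Matrix.sum_apply, Matrix.smul_apply, smul_eq_mul, Equiv.Perm.permMatrix,
    PEquiv.toMatrix_apply, Equiv.toPEquiv_apply, Matrix.of_apply, Option.mem_def,
    Option.some.injEq, mul_ite, mul_one, mul_zero] at entry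
  rw [mul_comm, ← entry]

lemma sum_perm_ite_mem_balancedTables {M : ℕ} (k : Equiv.Perm (Fin q) → ℕ)
    (hk : ∑ π, k π = M) :
    (fun a : Fin q × Fin q ↦ ∑ π : Equiv.Perm (Fin q), if π a.1 = a.2 then k π else 0) ∈
      balancedTables q M := by
  refine mem_balancedTables.2 ⟨fun r ↦ ?_, fun s ↦ ?_⟩
  · rw [sum_comm]
    simp [hk]
  · rw [sum_comm]
    simp [← Equiv.eq_symm_apply, hk]

lemma exists_balancedTables_tendsto (hq : 0 < q) {μ : Fin q × Fin q → ℝ}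
    (hμ : μ ∈ balancedMeasures q) :
    ∃ n : ℕ → Fin q × Fin q → ℕ, (∀ M, n M ∈ balancedTables q M) ∧
      Tendsto (fun M ↦ empiricalMeasure (M * q) (n M)) atTop (𝓝 μ) := by
  obtain ⟨w, hw, hμw⟩ := exists_eq_sum_perm_of_mem_balancedMeasures hq hμ
  obtain ⟨k, hk, hkw⟩ := exists_nat_tendsto_of_mem_stdSimplex hw
  refine ⟨_, fun M ↦ sum_perm_ite_mem_balancedTables (k M) (hk M), tendsto_pi_nhds.2 ?_⟩
  rintro ⟨r, s⟩
  have perm_lim (π : Equiv.Perm (Fin q)) :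
      Tendsto (fun M ↦ if π r = s then (k M π : ℝ) / M else 0) atTop
        (𝓝 (if π r = s then w π else 0)) := by
    split_ifs
    · exact hkw π
    · exact tendsto_const_nhds
  rw [hμw]
  refine ((tendsto_finsetSum univ fun π _ ↦ perm_lim π).div_const (q : ℝ)).congr fun M ↦ ?_
  simp only [empiricalMeasure, Nat.cast_sum, Nat.cast_ite, Nat.cast_zero, Nat.cast_mul,
    div_mul_eq_div_div, sum_div, ite_div, zero_div]

end BalancedMeasures

section Disorder

open Finset

lemma prod_poissonPMF {B : Type*} [Fintype B] (lam : ℝ) (k : B → ℕ) :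
    ∏ b, poissonPMF lam (k b) =
      Real.exp (-lam) ^ Fintype.card B * lam ^ (∑ b, k b) / (∑ b, k b).factorial *
        Nat.multinomial univ k := by
  have factorials : (∏ b, ((k b).factorial : ℝ)) ≠ 0 :=
    prod_ne_zero_iff.2 fun b _ ↦ Nat.cast_ne_zero.2 (k b).factorial_ne_zero
  have multinomial_ne : (Nat.multinomial univ k : ℝ) ≠ 0 :=
    Nat.cast_ne_zero.2 (Nat.multinomial_pos univ k).ne'
  have spec : (∏ b, ((k b).factorial : ℝ)) * Nat.multinomial univ k = (∑ b, k b).factorial := by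
    exact_mod_cast Nat.multinomial_spec univ k
  simp only [poissonPMF, prod_div_distrib, prod_mul_distrib, prod_pow_eq_pow_sum, prod_const,
    card_univ]
  rw [← spec]
  field_simp

variable {N K : ℕ} {c : ℝ}

lemma E_ite_sum_eq (N K : ℕ) (c : ℝ) (X : (Fin N → Fin N → ℕ) → ℝ) :
    potts.E N (fun _ _ ↦ c) (fun J ↦ if ∑ i, ∑ j, J i j = K then X J else 0) =
      Real.exp (-(c / (2 * N))) ^ (N * N) * (c / (2 * N)) ^ K / K.factorial *
        ∑ k ∈ piAntidiag (univ : Finset (Fin N × Fin N)) K,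
          Nat.multinomial univ k * X (Function.curry k) := by
  have sum_curry (k : Fin N × Fin N → ℕ) : ∑ i, ∑ j, Function.curry k i j = ∑ a, k a :=
    (Fintype.sum_prod_type k).symm
  have prod_curry (k : Fin N × Fin N → ℕ) :
      ∏ i, ∏ j, poissonPMF (c / (2 * N)) (Function.curry k i j) =
        ∏ a, poissonPMF (c / (2 * N)) (k a) :=
    (Fintype.prod_prod_type fun a ↦ poissonPMF (c / (2 * N)) (k a)).symm
  rw [potts.E, ← (Equiv.curry (Fin N) (Fin N) ℕ).tsum_eq]
  simp only [Equiv.curry_apply, sum_curry, prod_curry]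
  rw [tsum_eq_sum (s := piAntidiag univ K), mul_sum]
  · refine sum_congr rfl fun k hk ↦ ?_
    have hk' : ∑ a, k a = K := (mem_piAntidiag.1 hk).1
    rw [if_pos hk', prod_poissonPMF, hk', Fintype.card_prod, Fintype.card_fin, mul_assoc]
  · intro k hk
    rw [if_neg fun h ↦ hk (mem_piAntidiag.2 ⟨h, fun a _ ↦ mem_univ a⟩), mul_zero]

lemma condE_sum {S : Type*} (s : Finset S) (X : S → (Fin N → Fin N → ℕ) → ℝ) :
    condE N c K (fun J ↦ ∑ σ ∈ s, X σ J) = ∑ σ ∈ s, condE N c K (X σ) := by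
  simp only [condE, ← sum_div, E_ite_sum_eq, ← mul_sum]
  rw [sum_comm]
  simp only [mul_sum]

lemma sum_piAntidiag_multinomial_mul_prod_pow {ι : Type*} [Fintype ι] [DecidableEq ι] (K : ℕ)
    (x : ι → ι → ℝ) :
    ∑ k ∈ piAntidiag (univ : Finset (ι × ι)) K,
      (Nat.multinomial univ k : ℝ) * ∏ i, ∏ j, x i j ^ Function.curry k i j =
        (∑ i, ∑ j, x i j) ^ K := by
  rw [← Fintype.sum_prod_type' x, sum_pow_eq_sum_piAntidiag]
  simp only [Fintype.prod_prod_type, Function.curry_apply]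

/-- Given `|J| = K`, the matrix `J` is obtained by dropping `K` edges independently and uniformly
on the `N²` ordered pairs of sites. -/
lemma condE_prod_pow (hN : N ≠ 0) (hc : c ≠ 0) (x : Fin N → Fin N → ℝ) :
    condE N c K (fun J ↦ ∏ i, ∏ j, x i j ^ J i j) = ((∑ i, ∑ j, x i j) / (N : ℝ) ^ 2) ^ K := by
  have normalization := sum_piAntidiag_multinomial_mul_prod_pow K fun _ _ : Fin N ↦ (1 : ℝ)
  simp only [one_pow, prod_const_one, sum_const, card_univ, Fintype.card_fin, nsmul_eq_mul,
    mul_one] at normalization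
  rw [condE, E_ite_sum_eq, E_ite_sum_eq, mul_div_mul_left _ _ (by positivity),
    sum_piAntidiag_multinomial_mul_prod_pow]
  simp only [mul_one]
  rw [normalization, div_pow, sq]

end Disorder

section Moments

open Finset
open scoped Topology

/-- The Boltzmann factor contributed by one edge from `i` to `j` in the configuration `σ`. -/
noncomputable def bondWeight {ι A : Type*} [DecidableEq A] (β : ℝ) (σ : ι → A) (i j : ι) : ℝ :=
  1 - (1 - Real.exp (-β)) * if σ i = σ j then 1 else 0

/-- The mean Boltzmann factor of a uniformly random edge in a pair of balanced configurations
whose joint empirical measure is `μ`. -/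
noncomputable def replicaWeight (q : ℕ) (β : ℝ) (μ : Fin q × Fin q → ℝ) : ℝ :=
  1 - 2 * (1 - Real.exp (-β)) / q + (1 - Real.exp (-β)) ^ 2 * ∑ a, μ a ^ 2

lemma exp_neg_mul_H {q N : ℕ} (β : ℝ) (σ : Fin N → Fin q) (J : Fin N → Fin N → ℕ) :
    Real.exp (-β * potts.H q N σ fun i j ↦ J i j) = ∏ i, ∏ j, bondWeight β σ i j ^ J i j := by
  simp only [potts.H, mul_sum, Real.exp_sum]
  refine prod_congr rfl fun i _ ↦ prod_congr rfl fun j _ ↦ ?_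
  rw [bondWeight]
  split_ifs
  · rw [mul_one, mul_one, sub_sub_cancel, ← Real.exp_nat_mul, mul_comm]
  · simp

lemma sum_bondWeight {ι A : Type*} [Fintype ι] [Fintype A] [DecidableEq A] (β : ℝ) (σ : ι → A) :
    ∑ i, ∑ j, bondWeight β σ i j =
      (Fintype.card ι : ℝ) ^ 2 - (1 - Real.exp (-β)) * ∑ a, (occupation σ a : ℝ) ^ 2 := by
  simp only [bondWeight, sum_sub_distrib, ← mul_sum, sum_sum_ite_eq, sum_const, card_univ,
    nsmul_eq_mul, mul_one, sq]

lemma sum_bondWeight_mul_bondWeight {ι A B : Type*} [Fintype ι] [Fintype A] [Fintype B]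
    [DecidableEq A] [DecidableEq B] (β : ℝ) (ρ : ι → A × B) :
    ∑ i, ∑ j, bondWeight β (fun i ↦ (ρ i).1) i j * bondWeight β (fun i ↦ (ρ i).2) i j =
      (Fintype.card ι : ℝ) ^ 2
        - (1 - Real.exp (-β)) * ∑ a, (occupation (fun i ↦ (ρ i).1) a : ℝ) ^ 2
        - (1 - Real.exp (-β)) * ∑ b, (occupation (fun i ↦ (ρ i).2) b : ℝ) ^ 2
        + (1 - Real.exp (-β)) ^ 2 * ∑ p, (occupation ρ p : ℝ) ^ 2 := by
  have expand (i j : ι) :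
      bondWeight β (fun i ↦ (ρ i).1) i j * bondWeight β (fun i ↦ (ρ i).2) i j =
        1 - (1 - Real.exp (-β)) * (if (ρ i).1 = (ρ j).1 then 1 else 0)
          - (1 - Real.exp (-β)) * (if (ρ i).2 = (ρ j).2 then 1 else 0)
          + (1 - Real.exp (-β)) ^ 2 * (if ρ i = ρ j then 1 else 0) := by
    by_cases h₁ : (ρ i).1 = (ρ j).1 <;> by_cases h₂ : (ρ i).2 = (ρ j).2 <;>
      simp only [bondWeight, Prod.ext_iff, h₁, h₂, and_true, and_false, if_true, if_false] <;> ring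
  simp only [expand, sum_add_distrib, sum_sub_distrib, ← mul_sum, sum_const, card_univ,
    nsmul_eq_mul, mul_one, ← sq, sum_sum_ite_eq ρ, sum_sum_ite_eq fun i ↦ (ρ i).1,
    sum_sum_ite_eq fun i ↦ (ρ i).2]

variable {q M K : ℕ} {c : ℝ}

lemma Ztilde_eq_sum_prod_bondWeight (β : ℝ) (J : Fin (M * q) → Fin (M * q) → ℕ) :
    Ztilde q M β (fun i j ↦ J i j) =
      ∑ σ : Fin (M * q) → Fin q with occupation σ = fun _ ↦ M,
        ∏ i, ∏ j, bondWeight β σ i j ^ J i j := by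
  simp only [Ztilde, sum_filter, exp_neg_mul_H, funext_iff, occupation]

lemma occupation_mem_balancedTables_iff {ρ : Fin (M * q) → Fin q × Fin q} :
    occupation ρ ∈ balancedTables q M ↔
      (occupation (fun i ↦ (ρ i).1) = fun _ ↦ M) ∧ occupation (fun i ↦ (ρ i).2) = fun _ ↦ M := by
  simp only [mem_balancedTables, sum_occupation_prod_right, sum_occupation_prod_left, funext_iff]

lemma Ztilde_sq_eq_sum_prod_bondWeight (β : ℝ) (J : Fin (M * q) → Fin (M * q) → ℕ) :
    Ztilde q M β (fun i j ↦ J i j) ^ 2 =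
      ∑ ρ : Fin (M * q) → Fin q × Fin q with occupation ρ ∈ balancedTables q M,
        ∏ i, ∏ j, (bondWeight β (fun i ↦ (ρ i).1) i j * bondWeight β (fun i ↦ (ρ i).2) i j)
          ^ J i j := by
  rw [Ztilde_eq_sum_prod_bondWeight, sq, sum_mul_sum, ← sum_product']
  refine sum_equiv (Equiv.arrowProdEquivProdArrow _ _ _).symm ?_ ?_
  · rintro ⟨σ, τ⟩
    simp [occupation_mem_balancedTables_iff, Equiv.arrowProdEquivProdArrow]
  · rintro ⟨σ, τ⟩ -
    simp only [← prod_mul_distrib, ← mul_pow, Equiv.arrowProdEquivProdArrow, Equiv.coe_fn_symm_mk]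

lemma condE_Ztilde (hq : 0 < q) (hM : 0 < M) (hc : c ≠ 0) (β : ℝ) :
    condE (M * q) c K (fun J ↦ Ztilde q M β fun i j ↦ J i j) =
      typeSum (M * q) K {fun _ : Fin q ↦ M} fun _ ↦ 1 - (1 - Real.exp (-β)) / q := by
  have hq' : (q : ℝ) ≠ 0 := Nat.cast_ne_zero.2 hq.ne'
  have hM' : (M : ℝ) ≠ 0 := Nat.cast_ne_zero.2 hM.ne'
  have mean_bondWeight (σ : Fin (M * q) → Fin q) (hσ : occupation σ = fun _ ↦ M) :
      (∑ i, ∑ j, bondWeight β σ i j) / ((M * q : ℕ) : ℝ) ^ 2 = 1 - (1 - Real.exp (-β)) / q := by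
    rw [sum_bondWeight, hσ]
    simp only [Fintype.card_fin, sum_const, card_univ, nsmul_eq_mul, Nat.cast_mul]
    field_simp
  simp only [Ztilde_eq_sum_prod_bondWeight, condE_sum, condE_prod_pow (mul_pos hM hq).ne' hc]
  rw [sum_congr rfl fun σ hσ ↦ by rw [mean_bondWeight σ (mem_filter.1 hσ).2], sum_const,
    card_occupation_eq _ (by simp [mul_comm]), nsmul_eq_mul, typeSum, sum_singleton]

lemma condE_Ztilde_sq (hq : 0 < q) (hM : 0 < M) (hc : c ≠ 0) (β : ℝ) :
    condE (M * q) c K (fun J ↦ Ztilde q M β (fun i j ↦ J i j) ^ 2) =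
      typeSum (M * q) K (balancedTables q M) (replicaWeight q β) := by
  have hq' : (q : ℝ) ≠ 0 := Nat.cast_ne_zero.2 hq.ne'
  have hM' : (M : ℝ) ≠ 0 := Nat.cast_ne_zero.2 hM.ne'
  have mean_bondWeight (ρ : Fin (M * q) → Fin q × Fin q)
      (hρ : occupation ρ ∈ balancedTables q M) :
      (∑ i, ∑ j, bondWeight β (fun i ↦ (ρ i).1) i j * bondWeight β (fun i ↦ (ρ i).2) i j) /
          ((M * q : ℕ) : ℝ) ^ 2 =
        replicaWeight q β (empiricalMeasure (M * q) (occupation ρ)) := by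
    obtain ⟨h₁, h₂⟩ := occupation_mem_balancedTables_iff.1 hρ
    rw [sum_bondWeight_mul_bondWeight, h₁, h₂]
    simp only [Fintype.card_fin, sum_const, card_univ, nsmul_eq_mul, Nat.cast_mul, replicaWeight,
      empiricalMeasure, div_pow, ← sum_div]
    field_simp
    ring
  simp only [Ztilde_sq_eq_sum_prod_bondWeight, condE_sum,
    condE_prod_pow (mul_pos hM hq).ne' hc]
  rw [sum_congr rfl fun ρ hρ ↦ by rw [mean_bondWeight ρ (mem_filter.1 hρ).2]]
  exact sum_occupation_mem _
    (fun n hn ↦ (sum_eq_of_mem_balancedTables hn).trans (Fintype.card_fin _).symm)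
    fun n ↦ replicaWeight q β (empiricalMeasure (M * q) n) ^ K

lemma one_sub_one_sub_exp_div_pos (hq : 0 < q) (β : ℝ) : 0 < 1 - (1 - Real.exp (-β)) / q := by
  have hq' : (1 : ℝ) ≤ q := Nat.one_le_cast.2 hq
  rw [sub_pos, div_lt_one (by positivity)]
  linarith [Real.exp_pos (-β)]

lemma replicaWeight_pos (hq : 0 < q) (β : ℝ) {μ : Fin q × Fin q → ℝ}
    (hμ : μ ∈ balancedMeasures q) : 0 < replicaWeight q β μ := by
  have hq' : (q : ℝ) ≠ 0 := Nat.cast_ne_zero.2 hq.ne'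
  have mass : ∑ a, μ a = 1 := by
    have rows : ∀ r, ∑ s, μ (r, s) = 1 / q := hμ.2.1
    simp [Fintype.sum_prod_type, rows, hq']
  have cauchy_schwarz : 1 / (q : ℝ) ^ 2 ≤ ∑ a, μ a ^ 2 := by
    have := sq_sum_le_card_mul_sum_sq (s := univ) (f := μ)
    rw [mass, card_univ, Fintype.card_prod, Fintype.card_fin] at this
    rw [div_le_iff₀ (by positivity)]
    push_cast at this
    linarith
  calc 0 < (1 - (1 - Real.exp (-β)) / q) ^ 2 := pow_pos (one_sub_one_sub_exp_div_pos hq β) 2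
    _ = 1 - 2 * (1 - Real.exp (-β)) / q + (1 - Real.exp (-β)) ^ 2 * (1 / (q : ℝ) ^ 2) := by ring
    _ ≤ replicaWeight q β μ := by
      rw [replicaWeight]
      gcongr

lemma continuous_replicaWeight (q : ℕ) (β : ℝ) : Continuous (replicaWeight q β) := by
  unfold replicaWeight
  fun_prop

lemma phi2_curry (β κ : ℝ) (μ : Fin q × Fin q → ℝ) :
    phi2 q β κ (Function.curry μ) = typeRate (κ / 2) (replicaWeight q β) μ := by
  simp only [phi2, typeRate, shannonEntropy, replicaWeight, Real.negMulLog, Fintype.sum_prod_type,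
    Function.curry_apply, neg_mul, sum_neg_distrib]

lemma setOf_phi2_eq_image (q : ℕ) (β κ : ℝ) :
    {y : ℝ | ∃ μ : Fin q → Fin q → ℝ, IsBalancedMeasure q μ ∧ y = phi2 q β κ μ} =
      typeRate (κ / 2) (replicaWeight q β) '' balancedMeasures q := by
  ext y
  constructor
  · rintro ⟨μ, hμ, rfl⟩
    exact ⟨Function.uncurry μ, hμ, (phi2_curry β κ _).symm⟩
  · rintro ⟨μ, hμ, rfl⟩
    exact ⟨Function.curry μ, hμ, (phi2_curry β κ μ).symm⟩

lemma typeRate_uniform (hq : 0 < q) (β κ : ℝ) :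
    typeRate (κ / 2) (fun _ ↦ 1 - (1 - Real.exp (-β)) / q) (fun _ : Fin q ↦ 1 / (q : ℝ)) =
      potts.annealed q β κ := by
  have : NeZero q := ⟨hq.ne'⟩
  have entropy := shannonEntropy_uniform (A := Fin q)
  rw [Fintype.card_fin] at entropy
  rw [typeRate, entropy, potts.annealed]

variable {α : Type*} {l : Filter α} {M K : α → ℕ} {κ : ℝ}

theorem tendsto_log_condE_Ztilde (hq : 0 < q) (hc : c ≠ 0) (β : ℝ) (hM : Tendsto M l atTop)
    (hK : Tendsto (fun i ↦ (K i : ℝ) / (M i * q)) l (𝓝 (κ / 2))) :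
    Tendsto (fun i ↦ 1 / ((M i : ℝ) * q) * Real.log (condE (M i * q) c (K i)
        fun J ↦ Ztilde q (M i) β fun a b ↦ J a b)) l (𝓝 (potts.annealed q β κ)) := by
  have M_pos : ∀ᶠ i in l, 0 < M i := hM.eventually (eventually_gt_atTop 0)
  have empirical : ∀ᶠ i in l,
      empiricalMeasure (M i * q) (fun _ : Fin q ↦ M i) = fun _ ↦ 1 / (q : ℝ) := by
    filter_upwards [M_pos] with i hMi
    have hMi' : (M i : ℝ) ≠ 0 := Nat.cast_ne_zero.2 hMi.ne'
    funext a
    rw [empiricalMeasure, Nat.cast_mul, div_mul_eq_div_div, div_self hMi']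
  have limit := tendsto_log_typeSum (N := fun i ↦ M i * q) (K := K) (t := κ / 2)
    (T := fun i ↦ {fun _ : Fin q ↦ M i}) (C := {fun _ ↦ 1 / (q : ℝ)})
    (F := fun _ ↦ 1 - (1 - Real.exp (-β)) / q) (hM.atTop_mul_const' hq)
    (by simpa only [Nat.cast_mul] using hK) isCompact_singleton (Set.singleton_nonempty _)
    continuousOn_const (fun _ _ ↦ one_sub_one_sub_exp_div_pos hq β) (by simp [mul_comm])
    (empirical.mono fun i hi n hn ↦ by rw [mem_singleton.1 hn]; exact hi)
    fun μ hμ ↦ ⟨fun i _ ↦ M i, .of_forall fun i ↦ mem_singleton_self _,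
      by rw [Set.mem_singleton_iff.1 hμ]; exact tendsto_nhds_of_eventually_eq empirical⟩
  rw [Set.image_singleton, csSup_singleton, typeRate_uniform hq] at limit
  refine limit.congr' ?_
  filter_upwards [M_pos] with i hMi
  rw [condE_Ztilde hq hMi hc, Nat.cast_mul]

theorem tendsto_log_condE_Ztilde_sq (hq : 0 < q) (hc : c ≠ 0) (β : ℝ) (hM : Tendsto M l atTop)
    (hK : Tendsto (fun i ↦ (K i : ℝ) / (M i * q)) l (𝓝 (κ / 2))) :
    Tendsto (fun i ↦ 1 / ((M i : ℝ) * q) * Real.log (condE (M i * q) c (K i)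
        fun J ↦ Ztilde q (M i) β (fun a b ↦ J a b) ^ 2)) l
      (𝓝 (sSup {y : ℝ | ∃ μ : Fin q → Fin q → ℝ,
        IsBalancedMeasure q μ ∧ y = phi2 q β κ μ})) := by
  have M_pos : ∀ᶠ i in l, 0 < M i := hM.eventually (eventually_gt_atTop 0)
  have dense (μ) (hμ : μ ∈ balancedMeasures q) : ∃ n : α → Fin q × Fin q → ℕ,
      (∀ᶠ i in l, n i ∈ balancedTables q (M i)) ∧
        Tendsto (fun i ↦ empiricalMeasure (M i * q) (n i)) l (𝓝 μ) := by
    obtain ⟨n, hn, hnμ⟩ := exists_balancedTables_tendsto hq hμ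
    exact ⟨n ∘ M, .of_forall fun i ↦ hn (M i), hnμ.comp hM⟩
  have limit := tendsto_log_typeSum (N := fun i ↦ M i * q) (hM.atTop_mul_const' hq)
    (by simpa only [Nat.cast_mul] using hK) (isCompact_balancedMeasures q)
    ⟨_, uniform_mem_balancedMeasures hq⟩ (continuous_replicaWeight q β).continuousOn
    (fun μ hμ ↦ replicaWeight_pos hq β hμ) (fun i n hn ↦ sum_eq_of_mem_balancedTables hn)
    (M_pos.mono fun i hMi n hn ↦ empiricalMeasure_mem_balancedMeasures hMi hn) dense
  rw [setOf_phi2_eq_image]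
  refine limit.congr' ?_
  filter_upwards [M_pos] with i hMi
  rw [condE_Ztilde_sq hq hMi hc, Nat.cast_mul]

theorem statement16_general (hq : 0 < q) (β : ℝ) (hc : 0 < c) (hM : Tendsto M l atTop)
    (hK : Tendsto (fun i ↦ (K i : ℝ) / (M i * q)) l (𝓝 (κ / 2))) :
    Tendsto (fun i ↦ 1 / ((M i : ℝ) * q) * Real.log (condE (M i * q) c (K i)
        fun J ↦ Ztilde q (M i) β fun a b ↦ J a b)) l (𝓝 (potts.annealed q β κ)) ∧
    Tendsto (fun i ↦ 1 / ((M i : ℝ) * q) * Real.log (condE (M i * q) c (K i)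
        fun J ↦ Ztilde q (M i) β (fun a b ↦ J a b) ^ 2)) l
      (𝓝 (sSup {y : ℝ | ∃ μ : Fin q → Fin q → ℝ,
        IsBalancedMeasure q μ ∧ y = phi2 q β κ μ})) :=
  ⟨tendsto_log_condE_Ztilde hq hc.ne' β hM hK, tendsto_log_condE_Ztilde_sq hq hc.ne' β hM hK⟩

end Moments

/-- large deviation limits of the first and second conditional
moments of the constrained partition function. -/
theorem statement16 (q : ℕ) (hq : 2 ≤ q) (β κ c : ℝ)
    (hβ : 0 ≤ β) (hκ : 0 < κ) (hc : 0 < c)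
    (M K : ℕ → ℕ)
    (hM : Filter.Tendsto M Filter.atTop Filter.atTop)
    (hK : Filter.Tendsto (fun n => (K n : ℝ) / ((M n : ℝ) * q))
      Filter.atTop (nhds (κ / 2))) :
    Filter.Tendsto (fun n => (1 / ((M n : ℝ) * q)) *
        Real.log (condE (M n * q) c (K n)
          (fun J => Ztilde q (M n) β (fun a b => (J a b : ℝ)))))
      Filter.atTop (nhds (potts.annealed q β κ)) ∧
    Filter.Tendsto (fun n => (1 / ((M n : ℝ) * q)) *
        Real.log (condE (M n * q) c (K n)
          (fun J => (Ztilde q (M n) β (fun a b => (J a b : ℝ))) ^ 2)))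
      Filter.atTop
      (nhds (sSup {y : ℝ | ∃ μ : Fin q → Fin q → ℝ,
        IsBalancedMeasure q μ ∧ y = phi2 q β κ μ})) :=
  statement16_general (by omega) β hc hM hK
end

section
/- Let q = 2, β ≥ 0, c > 0, and x = (1−e^{−β})/(1+e^{−β}). If c x² ≤ 1, then max_{μ ∈ M_*([2]²)} φ^(2)(β,c,2,μ) = 2 𝒫(β,c,2), and the maximum is attained at the uniform measure on [2]². -/
open MeasureTheory Filter

/-!
A balanced measure on `[2]²` is determined by the probability `θ` that the two coordinates agree,
and its entropy is `log 2 + h(θ)`, with `h` the binary entropy. For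
`x = (1 - e^{-β}) / (1 + e^{-β})` the interaction term factors, so that
`φ⁽²⁾ = 2𝒫 - (log 2 - h(θ)) + (c/2) log (1 + x² (2θ - 1)²)`.
Since `h'' ≤ -4` and `h` is symmetric about `1/2`, the entropy deficit `log 2 - h(θ)` is at least
`(2θ - 1)² / 2`, while `c x² ≤ 1` and `log (1 + y) ≤ y` bound the energy gain by the same quantity.
-/

section

open Real

theorem strongConcaveOn_binEntropy : StrongConcaveOn (Set.Icc 0 1) 4 binEntropy := by
  rw [strongConcaveOn_iff_convex]
  refine concaveOn_of_hasDerivWithinAt2_nonpos (convex_Icc 0 1)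
    (f' := fun p => log (1 - p) - log p + 4 * p) (f'' := fun p => -1 / (1 - p) - 1 / p + 4)
    (by fun_prop) ?_ ?_ ?_ <;> rw [interior_Icc] <;> rintro p ⟨hp₀, hp₁⟩
  · have hsq : HasDerivAt (fun p : ℝ => 4 / 2 * ‖p‖ ^ 2) (4 * p) p := by
      simp only [norm_eq_abs, sq_abs]
      exact ((hasDerivAt_pow 2 p).const_mul (4 / 2)).congr_deriv (by push_cast; ring)
    exact ((hasDerivAt_binEntropy hp₀.ne' hp₁.ne).add hsq).hasDerivWithinAt
  · have hlog_one_sub := ((hasDerivAt_id p).const_sub 1).log (sub_pos.2 hp₁).ne'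
    have hlog := (hasDerivAt_id p).log hp₀.ne'
    have hlin : HasDerivAt (fun p : ℝ => 4 * p) 4 p := by
      simpa using (hasDerivAt_id p).const_mul 4
    exact ((hlog_one_sub.sub hlog).add hlin).hasDerivWithinAt
  · have hq : 0 < 1 - p := sub_pos.2 hp₁
    have hsum : -1 / (1 - p) - 1 / p + 4 = -((2 * p - 1) ^ 2 / (p * (1 - p))) := by
      field_simp
      ring
    rw [hsum, neg_nonpos]
    exact div_nonneg (sq_nonneg _) (mul_pos hp₀ hq).le

theorem binEntropy_add_sq_le_log_two {p : ℝ} (hp : p ∈ Set.Icc (0 : ℝ) 1) :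
    binEntropy p + (2 * p - 1) ^ 2 / 2 ≤ log 2 := by
  have hp' : 1 - p ∈ Set.Icc (0 : ℝ) 1 := ⟨by linarith [hp.2], by linarith [hp.1]⟩
  have hmid := strongConcaveOn_binEntropy.2 hp hp'
    (show (0 : ℝ) ≤ 2⁻¹ by norm_num) (show (0 : ℝ) ≤ 2⁻¹ by norm_num) (by norm_num)
  have hcenter : (2⁻¹ : ℝ) * p + 2⁻¹ * (1 - p) = 2⁻¹ := by ring
  simp only [smul_eq_mul, binEntropy_one_sub, hcenter, binEntropy_two_inv, norm_eq_abs, sq_abs]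
    at hmid
  linarith

theorem mul_log_one_add_mul_le {c a t : ℝ} (ha : 0 ≤ a) (ht : 0 ≤ t) (hca : c * a ≤ 1) :
    c * log (1 + a * t) ≤ t := by
  have hat : 0 ≤ a * t := mul_nonneg ha ht
  rcases le_total c 0 with hc | hc
  · exact (mul_nonpos_of_nonpos_of_nonneg hc (log_nonneg (by linarith))).trans ht
  · calc c * log (1 + a * t) ≤ c * (a * t) := by
          gcongr
          linarith [log_le_sub_one_of_pos (show 0 < 1 + a * t by linarith)]
      _ = c * a * t := by ring
      _ ≤ 1 * t := by gcongr
      _ = t := one_mul t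

/-- The law on `[2]²` of two uniform spins that agree with probability `θ`: mass `θ / 2` at each
diagonal point and `(1 - θ) / 2` at each off-diagonal point. -/
noncomputable def overlapMeasure (θ : ℝ) : Fin 2 → Fin 2 → ℝ :=
  fun r₁ r₂ => if r₁ = r₂ then θ / 2 else (1 - θ) / 2

theorem isBalancedMeasure_two_iff {μ : Fin 2 → Fin 2 → ℝ} :
    IsBalancedMeasure 2 μ ↔ ∃ θ ∈ Set.Icc (0 : ℝ) 1, μ = overlapMeasure θ := by
  simp only [IsBalancedMeasure, Fin.forall_fin_two, Fin.sum_univ_two, Nat.cast_ofNat]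
  constructor
  · rintro ⟨⟨⟨h₀₀, h₀₁⟩, -⟩, ⟨hrow₀, -⟩, hcol₀, hcol₁⟩
    refine ⟨2 * μ 0 0, ⟨by linarith, by linarith⟩, ?_⟩
    simp only [funext_iff, Fin.forall_fin_two, overlapMeasure, if_true, zero_ne_one, one_ne_zero,
      if_false]
    refine ⟨⟨?_, ?_⟩, ?_, ?_⟩ <;> linarith
  · rintro ⟨θ, ⟨hθ₀, hθ₁⟩, rfl⟩
    simp only [overlapMeasure, if_true, zero_ne_one, one_ne_zero, if_false]
    refine ⟨⟨⟨?_, ?_⟩, ?_, ?_⟩, ⟨?_, ?_⟩, ?_, ?_⟩ <;> linarith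

theorem overlapMeasure_two_inv : overlapMeasure 2⁻¹ = fun _ _ => 1 / 4 := by
  ext r₁ r₂
  norm_num [overlapMeasure]

theorem entropy_overlapMeasure (θ : ℝ) :
    -∑ r₁, ∑ r₂, overlapMeasure θ r₁ r₂ * log (overlapMeasure θ r₁ r₂) =
      log 2 + binEntropy θ := by
  have hhalf (t : ℝ) : t / 2 * log (t / 2) = -(t / 2 * log 2 + negMulLog t / 2) := by
    have := negMulLog_mul t 2⁻¹
    simp only [negMulLog, log_inv, ← div_eq_mul_inv] at this ⊢
    linarith
  simp only [Fin.sum_univ_two, overlapMeasure, if_true, zero_ne_one, one_ne_zero, if_false, hhalf,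
    binEntropy_eq_negMulLog_add_negMulLog_one_sub]
  ring

theorem sum_sq_overlapMeasure (θ : ℝ) :
    ∑ r₁, ∑ r₂, overlapMeasure θ r₁ r₂ ^ 2 = (1 + (2 * θ - 1) ^ 2) / 4 := by
  simp only [Fin.sum_univ_two, overlapMeasure, if_true, zero_ne_one, one_ne_zero, if_false]
  ring

theorem phi2_overlapMeasure (β c θ : ℝ) :
    phi2 2 β c (overlapMeasure θ) = 2 * potts.annealed 2 β c - (log 2 - binEntropy θ) +
      c / 2 * log (1 + ((1 - exp (-β)) / (1 + exp (-β))) ^ 2 * (2 * θ - 1) ^ 2) := by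
  have he : 0 < exp (-β) := exp_pos _
  rw [phi2, potts.annealed, entropy_overlapMeasure, sum_sq_overlapMeasure, Nat.cast_ofNat]
  generalize exp (-β) = e at he ⊢
  have hfactor : 1 - 2 * (1 - e) / 2 + (1 - e) ^ 2 * ((1 + (2 * θ - 1) ^ 2) / 4) =
      (1 - (1 - e) / 2) ^ 2 * (1 + ((1 - e) / (1 + e)) ^ 2 * (2 * θ - 1) ^ 2) := by
    field_simp
    ring
  have hbase : 1 - (1 - e) / 2 ≠ 0 := by linarith
  rw [hfactor, log_mul (pow_ne_zero 2 hbase) (by positivity), log_pow]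
  push_cast
  ring

end

theorem statement17_general (β c : ℝ)
    (hx : c * ((1 - Real.exp (-β)) / (1 + Real.exp (-β))) ^ 2 ≤ 1) :
    (∀ μ : Fin 2 → Fin 2 → ℝ, IsBalancedMeasure 2 μ →
        phi2 2 β c μ ≤ 2 * potts.annealed 2 β c) ∧
      phi2 2 β c (fun _ _ => 1 / 4) = 2 * potts.annealed 2 β c := by
  constructor
  · intro μ hμ
    obtain ⟨θ, hθ, rfl⟩ := isBalancedMeasure_two_iff.1 hμ
    have hentropy := binEntropy_add_sq_le_log_two hθ
    have henergy := mul_log_one_add_mul_le (sq_nonneg _) (sq_nonneg (2 * θ - 1)) hx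
    rw [phi2_overlapMeasure]
    linarith
  · rw [← overlapMeasure_two_inv, phi2_overlapMeasure, Real.binEntropy_two_inv]
    norm_num

/-- for `q = 2` and `c x² ≤ 1` with `x = (1-e^{-β})/(1+e^{-β})`,
the maximum of `φ⁽²⁾` over `M_*([2]²)` equals `2𝒫(β,c,2)` and is attained at
the uniform measure. -/
theorem statement17 (β c : ℝ) (hβ : 0 ≤ β) (hc : 0 < c)
    (hx : c * ((1 - Real.exp (-β)) / (1 + Real.exp (-β))) ^ 2 ≤ 1) :
    (∀ μ : Fin 2 → Fin 2 → ℝ, IsBalancedMeasure 2 μ →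
        phi2 2 β c μ ≤ 2 * potts.annealed 2 β c) ∧
      phi2 2 β c (fun _ _ => 1 / 4) = 2 * potts.annealed 2 β c :=
  statement17_general β c hx
end
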